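/- arXiv:1002.3237 — 4 statements merged into one kernel-verified Lean document; each statement's English description precedes it below -/
import Mathlib

section
/- Let u, v, w ∈ ℝ with w ≠ 0. Then the functions x₁(t) = (v/(2w))cos(2wt) + (u/(2w))sin(2wt) − v/(2w), x₂(t) = −(u/(2w))cos(2wt) + (v/(2w))sin(2wt) + u/(2w), x₃(t) = wt + ((u²+v²)/(2w))t − ((u²+v²)/(4w²))sin(2wt) satisfy x₁(0)=x₂(0)=x₃(0)=0, x₁'(0)=u, x₂'(0)=v, x₃'(0)=w, and for all t ∈ ℝ: x₃'(t) + x₂(t)x₁'(t) − x₁(t)x₂'(t) = w, (x₁' + w·x₂)'(t) = −w·x₂'(t), and (x₂' − w·x₁)'(t) = w·x₁'(t). (These are the geodesic equations of the Heisenberg metric for a geodesic through the origin with initial velocity (u,v,w).) -/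
/-!
The Euler–Lagrange equations for `x₁`, `x₂` say `x₁'' = -2w x₂'` and `x₂'' = 2w x₁'`: the horizontal
velocity rotates with angular velocity `2w`. So the projection `(x₁, x₂)` traverses a circle through
the origin, and the remaining equation `x₃' = w + (x₁ x₂' - x₂ x₁')` makes `x₃ - w t` twice the area
swept out by that projection.
-/

open Real

/-- First coordinate of the vector `(u, v)` rotated by the angle `θ`; it is the first component of
the velocity of uniform circular motion. -/
noncomputable def rotFst (u v θ : ℝ) : ℝ := u * cos θ - v * sin θ

/-- Second coordinate of the vector `(u, v)` rotated by the angle `θ`; it is the second component of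
the velocity of uniform circular motion. -/
noncomputable def rotSnd (u v θ : ℝ) : ℝ := u * sin θ + v * cos θ

/-- First coordinate at time `t` of the circular motion that starts at the origin with velocity
`(u, v)` and has angular velocity `ω`. Meaningful only for `ω ≠ 0`: straight-line motion, the limit
`ω → 0`, is not covered since division by zero gives `0`. -/
noncomputable def circFst (u v ω t : ℝ) : ℝ := (rotSnd u v (ω * t) - v) / ω

/-- Second coordinate at time `t` of the circular motion that starts at the origin with velocity
`(u, v)` and has angular velocity `ω`, under the same proviso `ω ≠ 0` as `circFst`. -/
noncomputable def circSnd (u v ω t : ℝ) : ℝ := (u - rotFst u v (ω * t)) / ω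

/-- Twice the signed area swept out up to time `t` by the segment from the origin to the circular
motion `(circFst u v ω, circSnd u v ω)`, in closed form and again for `ω ≠ 0`; it gives the vertical
coordinate of the geodesic. -/
noncomputable def twiceSweptArea (u v ω t : ℝ) : ℝ :=
  (u ^ 2 + v ^ 2) / ω * t - (u ^ 2 + v ^ 2) / ω ^ 2 * sin (ω * t)

theorem deriv_deriv_add_const_mul {𝕜 : Type*} [NontriviallyNormedField 𝕜] {f g : 𝕜 → 𝕜} {c t : 𝕜}
    (hf : HasDerivAt (deriv f) (-(2 * c) * deriv g t) t) (hg : DifferentiableAt 𝕜 g t) :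
    deriv (fun s => deriv f s + c * g s) t = -c * deriv g t :=
  ((hf.add (hg.hasDerivAt.const_mul c)).congr_deriv <| by ring).deriv

section Rotation

variable (u v ω t θ : ℝ)

@[simp]
theorem rotFst_zero : rotFst u v 0 = u := by simp [rotFst]

@[simp]
theorem rotSnd_zero : rotSnd u v 0 = v := by simp [rotSnd]

theorem rotFst_sq_add_rotSnd_sq : rotFst u v θ ^ 2 + rotSnd u v θ ^ 2 = u ^ 2 + v ^ 2 := by
  unfold rotFst rotSnd
  linear_combination (u ^ 2 + v ^ 2) * sin_sq_add_cos_sq θ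

theorem mul_rotFst_add_mul_rotSnd :
    u * rotFst u v θ + v * rotSnd u v θ = (u ^ 2 + v ^ 2) * cos θ := by
  unfold rotFst rotSnd
  ring

theorem hasDerivAt_rotFst : HasDerivAt (rotFst u v) (-rotSnd u v θ) θ :=
  (((hasDerivAt_cos θ).const_mul u).sub ((hasDerivAt_sin θ).const_mul v)).congr_deriv <| by
    unfold rotSnd
    ring

theorem hasDerivAt_rotSnd : HasDerivAt (rotSnd u v) (rotFst u v θ) θ :=
  (((hasDerivAt_sin θ).const_mul u).add ((hasDerivAt_cos θ).const_mul v)).congr_deriv <| by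
    unfold rotFst
    ring

theorem hasDerivAt_rotFst_const_mul :
    HasDerivAt (fun s => rotFst u v (ω * s)) (-ω * rotSnd u v (ω * t)) t :=
  ((hasDerivAt_rotFst u v (ω * t)).comp t (hasDerivAt_const_mul ω)).congr_deriv <| by ring

theorem hasDerivAt_rotSnd_const_mul :
    HasDerivAt (fun s => rotSnd u v (ω * s)) (ω * rotFst u v (ω * t)) t :=
  ((hasDerivAt_rotSnd u v (ω * t)).comp t (hasDerivAt_const_mul ω)).congr_deriv <| by ring

end Rotation

section CircularMotion

variable (u v : ℝ) {ω : ℝ} (t : ℝ)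

@[simp]
theorem circFst_zero (ω : ℝ) : circFst u v ω 0 = 0 := by simp [circFst]

@[simp]
theorem circSnd_zero (ω : ℝ) : circSnd u v ω 0 = 0 := by simp [circSnd]

@[simp]
theorem twiceSweptArea_zero (ω : ℝ) : twiceSweptArea u v ω 0 = 0 := by simp [twiceSweptArea]

theorem hasDerivAt_circFst (hω : ω ≠ 0) :
    HasDerivAt (circFst u v ω) (rotFst u v (ω * t)) t :=
  (((hasDerivAt_rotSnd_const_mul u v ω t).sub_const v).div_const ω).congr_deriv <| by
    field_simp

theorem hasDerivAt_circSnd (hω : ω ≠ 0) :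
    HasDerivAt (circSnd u v ω) (rotSnd u v (ω * t)) t :=
  (((hasDerivAt_rotFst_const_mul u v ω t).const_sub u).div_const ω).congr_deriv <| by
    field_simp

theorem deriv_circFst (hω : ω ≠ 0) : deriv (circFst u v ω) = fun t => rotFst u v (ω * t) :=
  funext fun t => (hasDerivAt_circFst u v t hω).deriv

theorem deriv_circSnd (hω : ω ≠ 0) : deriv (circSnd u v ω) = fun t => rotSnd u v (ω * t) :=
  funext fun t => (hasDerivAt_circSnd u v t hω).deriv

theorem hasDerivAt_deriv_circFst (hω : ω ≠ 0) :
    HasDerivAt (deriv (circFst u v ω)) (-ω * deriv (circSnd u v ω) t) t := by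
  rw [deriv_circFst u v hω, deriv_circSnd u v hω]
  exact hasDerivAt_rotFst_const_mul u v ω t

theorem hasDerivAt_deriv_circSnd (hω : ω ≠ 0) :
    HasDerivAt (deriv (circSnd u v ω)) (ω * deriv (circFst u v ω) t) t := by
  rw [deriv_circFst u v hω, deriv_circSnd u v hω]
  exact hasDerivAt_rotSnd_const_mul u v ω t

theorem circFst_mul_rotSnd_sub_circSnd_mul_rotFst (ω : ℝ) :
    circFst u v ω t * rotSnd u v (ω * t) - circSnd u v ω t * rotFst u v (ω * t) =
      (u ^ 2 + v ^ 2) / ω * (1 - cos (ω * t)) := by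
  unfold circFst circSnd
  linear_combination
    (rotFst_sq_add_rotSnd_sq u v (ω * t) - mul_rotFst_add_mul_rotSnd u v (ω * t)) / ω

theorem hasDerivAt_twiceSweptArea (hω : ω ≠ 0) :
    HasDerivAt (twiceSweptArea u v ω)
      (circFst u v ω t * deriv (circSnd u v ω) t - circSnd u v ω t * deriv (circFst u v ω) t)
      t := by
  have h_sin : HasDerivAt (fun s => sin (ω * s)) (cos (ω * t) * ω) t :=
    (hasDerivAt_const_mul ω).sin
  rw [deriv_circFst u v hω, deriv_circSnd u v hω, circFst_mul_rotSnd_sub_circSnd_mul_rotFst]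
  refine ((hasDerivAt_const_mul ((u ^ 2 + v ^ 2) / ω)).sub
    (h_sin.const_mul ((u ^ 2 + v ^ 2) / ω ^ 2))).congr_deriv ?_
  field_simp

theorem deriv_const_mul_add_twiceSweptArea (hω : ω ≠ 0) (c : ℝ) :
    deriv (fun s => c * s + twiceSweptArea u v ω s) t =
      c + (circFst u v ω t * deriv (circSnd u v ω) t -
        circSnd u v ω t * deriv (circFst u v ω) t) :=
  ((hasDerivAt_const_mul c).add (hasDerivAt_twiceSweptArea u v t hω)).deriv

end CircularMotion

/-- For `w ≠ 0`, the explicit curve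
`x₁(t) = (v/2w)cos 2wt + (u/2w)sin 2wt − v/2w`,
`x₂(t) = −(u/2w)cos 2wt + (v/2w)sin 2wt + u/2w`,
`x₃(t) = wt + ((u²+v²)/2w)t − ((u²+v²)/4w²)sin 2wt`
passes through the origin with velocity `(u,v,w)` and satisfies the geodesic
Euler–Lagrange equations of the Heisenberg metric. -/
theorem heis_geodesic_explicit (u v w : ℝ) (hw : w ≠ 0) (x₁ x₂ x₃ : ℝ → ℝ)
    (hx₁ : x₁ = fun t => v / (2 * w) * Real.cos (2 * w * t)
      + u / (2 * w) * Real.sin (2 * w * t) - v / (2 * w))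
    (hx₂ : x₂ = fun t => -(u / (2 * w)) * Real.cos (2 * w * t)
      + v / (2 * w) * Real.sin (2 * w * t) + u / (2 * w))
    (hx₃ : x₃ = fun t => w * t + (u ^ 2 + v ^ 2) / (2 * w) * t
      - (u ^ 2 + v ^ 2) / (4 * w ^ 2) * Real.sin (2 * w * t)) :
    x₁ 0 = 0 ∧ x₂ 0 = 0 ∧ x₃ 0 = 0 ∧
    deriv x₁ 0 = u ∧ deriv x₂ 0 = v ∧ deriv x₃ 0 = w ∧
    (∀ t : ℝ, deriv x₃ t + x₂ t * deriv x₁ t - x₁ t * deriv x₂ t = w) ∧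
    (∀ t : ℝ, deriv (fun t => deriv x₁ t + w * x₂ t) t = -w * deriv x₂ t) ∧
    (∀ t : ℝ, deriv (fun t => deriv x₂ t - w * x₁ t) t = w * deriv x₁ t) := by
  have hω : 2 * w ≠ 0 := mul_ne_zero two_ne_zero hw
  obtain rfl : x₁ = circFst u v (2 * w) := by
    funext t
    simp only [hx₁, circFst, rotSnd]
    ring
  obtain rfl : x₂ = circSnd u v (2 * w) := by
    funext t
    simp only [hx₂, circSnd, rotFst]
    ring
  obtain rfl : x₃ = fun t => w * t + twiceSweptArea u v (2 * w) t := by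
    funext t
    simp only [hx₃, twiceSweptArea]
    ring
  refine ⟨by simp, by simp, by simp, by simp [deriv_circFst u v hω],
    by simp [deriv_circSnd u v hω], by simp [deriv_const_mul_add_twiceSweptArea u v 0 hω w],
    fun t => ?_, fun t => ?_, fun t => ?_⟩
  · linear_combination deriv_const_mul_add_twiceSweptArea u v t hω w
  · exact deriv_deriv_add_const_mul (hasDerivAt_deriv_circFst u v t hω)
      (hasDerivAt_circSnd u v t hω).differentiableAt
  · simpa [sub_eq_add_neg] using deriv_deriv_add_const_mul (c := -w)
      (by simpa using hasDerivAt_deriv_circSnd u v t hω)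
      (hasDerivAt_circFst u v t hω).differentiableAt
end

section
/- Let u, v, w ∈ ℝ with w ≠ 0, and let x₁, x₂, x₃ : ℝ → ℝ be twice differentiable with x₁(0)=x₂(0)=x₃(0)=0, x₁'(0)=u, x₂'(0)=v, satisfying for all t ∈ ℝ: x₃'(t) + x₂(t)x₁'(t) − x₁(t)x₂'(t) = w, (x₁' + w·x₂)'(t) = −w·x₂'(t), and (x₂' − w·x₁)'(t) = w·x₁'(t). Then for all t ∈ ℝ: x₁(t) = (v/(2w))cos(2wt) + (u/(2w))sin(2wt) − v/(2w), x₂(t) = −(u/(2w))cos(2wt) + (v/(2w))sin(2wt) + u/(2w), and x₃(t) = wt + ((u²+v²)/(2w))t − ((u²+v²)/(4w²))sin(2wt). -/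
/-!
Expanding the derivatives in the last two Euler–Lagrange equations gives `x₁'' = -2w x₂'` and
`x₂'' = 2w x₁'`: the horizontal velocity rotates with constant angular speed `2w`. As
`x₁' + 2w x₂` and `x₂' - 2w x₁` are conserved, the horizontal position is read off the velocity
by dividing by `2w`, without a second integration. The first equation then says that `x₃' - w` is
`x₁ x₂' - x₂ x₁' = (u² + v²) (1 - cos 2wt) / (2w)`, twice the rate at which `(x₁, x₂)` sweeps out
area on its circle, and integrating this gives `x₃`.
-/

section LinearODE

variable {𝕜 𝔸 : Type*} [RCLike 𝕜] [NormedRing 𝔸] [NormedAlgebra 𝕜 𝔸]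

theorem eq_exp_smul_mul_of_hasDerivAt_mul [CompleteSpace 𝔸] {a : 𝔸} {f : 𝕜 → 𝔸}
    (hf : ∀ t, HasDerivAt f (a * f t) t) (t : 𝕜) :
    f t = NormedSpace.exp (t • a) * f 0 := by
  let : NormedAlgebra ℚ 𝔸 := .restrictScalars ℚ 𝕜 𝔸
  have hderiv (s : 𝕜) : HasDerivAt (fun s ↦ NormedSpace.exp (s • -a) * f s) 0 s :=
    ((hasDerivAt_exp_smul_const (-a) s).mul (hf s)).congr_deriv (by noncomm_ring)
  have hconst : NormedSpace.exp (t • -a) * f t = f 0 := by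
    simpa using is_const_of_deriv_eq_zero (fun s ↦ (hderiv s).differentiableAt)
      (fun s ↦ (hderiv s).deriv) t 0
  rw [← hconst, ← mul_assoc, smul_neg, ← NormedSpace.exp_add_of_commute (Commute.refl _).neg_right,
    add_neg_cancel, NormedSpace.exp_zero, one_mul]

theorem sub_eq_mul_sub_of_hasDerivAt_mul_deriv {c : 𝔸} {f g : 𝕜 → 𝔸} (hg : Differentiable 𝕜 g)
    (hf : ∀ t, HasDerivAt f (c * deriv g t) t) (s t : 𝕜) : f t - f s = c * (g t - g s) := by
  have hderiv (r : 𝕜) : HasDerivAt (fun r ↦ f r - c * g r) 0 r :=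
    ((hf r).sub ((hg r).hasDerivAt.const_mul c)).congr_deriv (sub_self _)
  have hconst : f t - c * g t = f s - c * g s :=
    is_const_of_deriv_eq_zero (fun r ↦ (hderiv r).differentiableAt) (fun r ↦ (hderiv r).deriv) t s
  rwa [mul_sub, sub_eq_sub_iff_sub_eq_sub]

end LinearODE

theorem hasDerivAt_of_deriv_add_const_mul_eq {𝕜 𝔸 : Type*} [NontriviallyNormedField 𝕜]
    [NormedRing 𝔸] [NormedAlgebra 𝕜 𝔸] {c : 𝔸} {f g : 𝕜 → 𝔸} {t : 𝕜}
    (hf : DifferentiableAt 𝕜 f t) (hg : DifferentiableAt 𝕜 g t)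
    (h : deriv (fun t ↦ f t + c * g t) t = -c * deriv g t) :
    HasDerivAt f (-(2 * c) * deriv g t) t := by
  rw [deriv_fun_add hf (hg.const_mul c), deriv_const_mul c hg] at h
  refine hf.hasDerivAt.congr_deriv ?_
  rw [eq_sub_of_add_eq h]
  noncomm_ring

theorem eq_rotation_of_hasDerivAt {ω : ℝ} {p q : ℝ → ℝ} (hp : ∀ t, HasDerivAt p (-ω * q t) t)
    (hq : ∀ t, HasDerivAt q (ω * p t) t) (t : ℝ) :
    p t = p 0 * Real.cos (ω * t) - q 0 * Real.sin (ω * t) ∧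
      q t = q 0 * Real.cos (ω * t) + p 0 * Real.sin (ω * t) := by
  have hz (s : ℝ) : HasDerivAt (fun s ↦ (p s + q s * Complex.I : ℂ))
      (ω * Complex.I * (p s + q s * Complex.I)) s := by
    refine ((hp s).ofReal_comp.add ((hq s).ofReal_comp.mul_const Complex.I)).congr_deriv ?_
    push_cast
    linear_combination -(ω * q s : ℂ) * Complex.I_sq
  have hexp : NormedSpace.exp (t • (ω * Complex.I)) =
      (Real.cos (ω * t) + Real.sin (ω * t) * Complex.I : ℂ) := by
    rw [← Complex.exp_eq_exp_ℂ, Complex.ofReal_cos, Complex.ofReal_sin, ← Complex.exp_mul_I,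
      Complex.real_smul]
    push_cast
    ring_nf
  have hsol := eq_exp_smul_mul_of_hasDerivAt_mul hz t
  rw [hexp] at hsol
  have hre := congrArg Complex.re hsol
  have him := congrArg Complex.im hsol
  simp only [Complex.add_re, Complex.add_im, Complex.mul_re, Complex.mul_im, Complex.ofReal_re,
    Complex.ofReal_im, Complex.I_re, Complex.I_im] at hre him
  constructor
  · linear_combination hre
  · linear_combination him

theorem eq_add_sin_of_hasDerivAt_cos {a b ω : ℝ} (hω : ω ≠ 0) {f : ℝ → ℝ}
    (hf : ∀ t, HasDerivAt f (a + b * Real.cos (ω * t)) t) (t : ℝ) :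
    f t = f 0 + a * t + b / ω * Real.sin (ω * t) := by
  have hprim (s : ℝ) : HasDerivAt (fun s ↦ a * s + b / ω * Real.sin (ω * s))
      (a + b * Real.cos (ω * s)) s :=
    ((hasDerivAt_const_mul a).add ((hasDerivAt_const_mul ω).sin.const_mul (b / ω))).congr_deriv
      (by field_simp)
  have hconst := sub_eq_mul_sub_of_hasDerivAt_mul_deriv (c := 1)
    (fun s ↦ (hprim s).differentiableAt)
    (fun s ↦ by simpa only [one_mul, (hprim s).deriv] using hf s) 0 t
  simp only [mul_zero, Real.sin_zero] at hconst
  linear_combination hconst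

/-- The plane curve `(x, y)` moves like a charged particle in a constant magnetic field: its
velocity rotates with constant angular speed `ω`. The horizontal projection of a Heisenberg
geodesic with vertical momentum `w` is such a motion with `ω = 2 * w`. -/
structure IsCyclotronMotion (ω : ℝ) (x y : ℝ → ℝ) : Prop where
  differentiable_fst : Differentiable ℝ x
  differentiable_snd : Differentiable ℝ y
  hasDerivAt_deriv_fst : ∀ t, HasDerivAt (deriv x) (-ω * deriv y t) t
  hasDerivAt_deriv_snd : ∀ t, HasDerivAt (deriv y) (ω * deriv x t) t

namespace IsCyclotronMotion

variable {ω : ℝ} {x y : ℝ → ℝ}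

theorem of_eulerLagrange {w : ℝ} (hx : Differentiable ℝ x) (hx' : Differentiable ℝ (deriv x))
    (hy : Differentiable ℝ y) (hy' : Differentiable ℝ (deriv y))
    (hELx : ∀ t, deriv (fun t ↦ deriv x t + w * y t) t = -w * deriv y t)
    (hELy : ∀ t, deriv (fun t ↦ deriv y t - w * x t) t = w * deriv x t) :
    IsCyclotronMotion (2 * w) x y where
  differentiable_fst := hx
  differentiable_snd := hy
  hasDerivAt_deriv_fst t := hasDerivAt_of_deriv_add_const_mul_eq (hx' t) (hy t) (hELx t)
  hasDerivAt_deriv_snd t := by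
    have hELy_neg : deriv (fun t ↦ deriv y t + -w * x t) t = - -w * deriv x t := by
      simpa only [neg_mul, neg_neg, ← sub_eq_add_neg] using hELy t
    simpa only [mul_neg, neg_neg] using
      hasDerivAt_of_deriv_add_const_mul_eq (hy' t) (hx t) hELy_neg

theorem deriv_eq (h : IsCyclotronMotion ω x y) (t : ℝ) :
    deriv x t = deriv x 0 * Real.cos (ω * t) - deriv y 0 * Real.sin (ω * t) ∧
      deriv y t = deriv y 0 * Real.cos (ω * t) + deriv x 0 * Real.sin (ω * t) :=
  eq_rotation_of_hasDerivAt h.hasDerivAt_deriv_fst h.hasDerivAt_deriv_snd t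

theorem fst_sub_eq (h : IsCyclotronMotion ω x y) (hω : ω ≠ 0) (t : ℝ) :
    x t - x 0 =
      (deriv y 0 * Real.cos (ω * t) + deriv x 0 * Real.sin (ω * t) - deriv y 0) / ω := by
  have hconserved :=
    sub_eq_mul_sub_of_hasDerivAt_mul_deriv h.differentiable_fst h.hasDerivAt_deriv_snd 0 t
  rw [eq_div_iff hω, ← (h.deriv_eq t).2, hconserved, mul_comm]

theorem snd_sub_eq (h : IsCyclotronMotion ω x y) (hω : ω ≠ 0) (t : ℝ) :
    y t - y 0 =
      (deriv x 0 - deriv x 0 * Real.cos (ω * t) + deriv y 0 * Real.sin (ω * t)) / ω := by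
  have hconserved :=
    sub_eq_mul_sub_of_hasDerivAt_mul_deriv h.differentiable_snd h.hasDerivAt_deriv_fst 0 t
  rw [eq_div_iff hω]
  linear_combination hconserved - (h.deriv_eq t).1

theorem fst_mul_deriv_snd_sub_snd_mul_deriv_fst (h : IsCyclotronMotion ω x y) (hω : ω ≠ 0)
    (t : ℝ) :
    (x t - x 0) * deriv y t - (y t - y 0) * deriv x t =
      (deriv x 0 ^ 2 + deriv y 0 ^ 2) / ω * (1 - Real.cos (ω * t)) := by
  rw [h.fst_sub_eq hω, h.snd_sub_eq hω, (h.deriv_eq t).1, (h.deriv_eq t).2]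
  field_simp
  linear_combination (deriv x 0 ^ 2 + deriv y 0 ^ 2) * Real.sin_sq_add_cos_sq (ω * t)

end IsCyclotronMotion

/-- Uniqueness of the Heisenberg geodesics through the origin with initial velocity
`(u,v,w)`, `w ≠ 0`: any twice differentiable solution of the geodesic Euler–Lagrange
equations of the Heisenberg metric with these initial data is given by the explicit
trigonometric formulas. -/
theorem heis_geodesic_unique (u v w : ℝ) (hw : w ≠ 0) (x₁ x₂ x₃ : ℝ → ℝ)
    (hx₁ : Differentiable ℝ x₁) (hx₁' : Differentiable ℝ (deriv x₁))
    (hx₂ : Differentiable ℝ x₂) (hx₂' : Differentiable ℝ (deriv x₂))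
    (hx₃ : Differentiable ℝ x₃) (hx₃' : Differentiable ℝ (deriv x₃))
    (h0₁ : x₁ 0 = 0) (h0₂ : x₂ 0 = 0) (h0₃ : x₃ 0 = 0)
    (hu : deriv x₁ 0 = u) (hv : deriv x₂ 0 = v)
    (hEL₁ : ∀ t : ℝ, deriv x₃ t + x₂ t * deriv x₁ t - x₁ t * deriv x₂ t = w)
    (hEL₂ : ∀ t : ℝ, deriv (fun t => deriv x₁ t + w * x₂ t) t = -w * deriv x₂ t)
    (hEL₃ : ∀ t : ℝ, deriv (fun t => deriv x₂ t - w * x₁ t) t = w * deriv x₁ t) :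
    ∀ t : ℝ,
      x₁ t = v / (2 * w) * Real.cos (2 * w * t)
        + u / (2 * w) * Real.sin (2 * w * t) - v / (2 * w) ∧
      x₂ t = -(u / (2 * w)) * Real.cos (2 * w * t)
        + v / (2 * w) * Real.sin (2 * w * t) + u / (2 * w) ∧
      x₃ t = w * t + (u ^ 2 + v ^ 2) / (2 * w) * t
        - (u ^ 2 + v ^ 2) / (4 * w ^ 2) * Real.sin (2 * w * t) := by
  have hω : 2 * w ≠ 0 := mul_ne_zero two_ne_zero hw
  have hmotion : IsCyclotronMotion (2 * w) x₁ x₂ :=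
    .of_eulerLagrange hx₁ hx₁' hx₂ hx₂' hEL₂ hEL₃
  have hx₃_deriv (t : ℝ) : HasDerivAt x₃ ((w + (u ^ 2 + v ^ 2) / (2 * w))
      + -((u ^ 2 + v ^ 2) / (2 * w)) * Real.cos (2 * w * t)) t := by
    have harea := hmotion.fst_mul_deriv_snd_sub_snd_mul_deriv_fst hω t
    rw [h0₁, h0₂, hu, hv] at harea
    exact (hx₃ t).hasDerivAt.congr_deriv (by linear_combination hEL₁ t + harea)
  intro t
  have hx₁_eq := hmotion.fst_sub_eq hω t
  have hx₂_eq := hmotion.snd_sub_eq hω t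
  have hx₃_eq := eq_add_sin_of_hasDerivAt_cos hω hx₃_deriv t
  rw [h0₁, hu, hv] at hx₁_eq
  rw [h0₂, hu, hv] at hx₂_eq
  rw [h0₃] at hx₃_eq
  refine ⟨?_, ?_, ?_⟩
  · linear_combination hx₁_eq
  · linear_combination hx₂_eq
  · linear_combination hx₃_eq
end

section
/- Let x = (x₁,x₂,x₃) : ℝ → ℝ³ be twice differentiable and satisfy the Christoffel form of the Heisenberg geodesic equations: x₁'' + 2x₂x₁'x₂' − 2x₁(x₂')² + 2x₂'x₃' = 0, x₂'' − 2x₂(x₁')² + 2x₁x₁'x₂' − 2x₁'x₃' = 0, x₃'' − 2x₁x₂(x₁')² + 2(x₁²−x₂²)x₁'x₂' + 2x₁x₂(x₂')² − 2x₁x₁'x₃' − 2x₂x₂'x₃' = 0 on ℝ. Then the natural lift y := (x₁', x₂', x₃') is parallel along x, i.e. D₁[x,y] = D₂[x,y] = D₃[x,y] ≡ 0, and consequently the pair (x, x') satisfies all six Euler–Lagrange equations of the Sasaki metric on TH₃. -/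
/-- First component of the covariant derivative of the field `y` along the curve `x`,
with respect to the Levi-Civita connection of the Heisenberg metric. -/
noncomputable def covD₁ (x₁ x₂ x₃ y₁ y₂ y₃ : ℝ → ℝ) : ℝ → ℝ := fun t =>
  deriv y₁ t + x₂ t * (y₁ t * deriv x₂ t + y₂ t * deriv x₁ t)
    - 2 * x₁ t * y₂ t * deriv x₂ t + y₂ t * deriv x₃ t + y₃ t * deriv x₂ t

/-- Second component of the covariant derivative of the field `y` along the curve `x`,
with respect to the Levi-Civita connection of the Heisenberg metric. -/
noncomputable def covD₂ (x₁ x₂ x₃ y₁ y₂ y₃ : ℝ → ℝ) : ℝ → ℝ := fun t =>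
  deriv y₂ t - 2 * x₂ t * y₁ t * deriv x₁ t
    + x₁ t * (y₁ t * deriv x₂ t + y₂ t * deriv x₁ t)
    - y₁ t * deriv x₃ t - y₃ t * deriv x₁ t

/-- Third component of the covariant derivative of the field `y` along the curve `x`,
with respect to the Levi-Civita connection of the Heisenberg metric. -/
noncomputable def covD₃ (x₁ x₂ x₃ y₁ y₂ y₃ : ℝ → ℝ) : ℝ → ℝ := fun t =>
  deriv y₃ t - 2 * x₁ t * x₂ t * y₁ t * deriv x₁ t
    + ((x₁ t) ^ 2 - (x₂ t) ^ 2) * (y₁ t * deriv x₂ t + y₂ t * deriv x₁ t)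
    - x₁ t * (y₁ t * deriv x₃ t + y₃ t * deriv x₁ t)
    + 2 * x₁ t * x₂ t * y₂ t * deriv x₂ t
    - x₂ t * (y₂ t * deriv x₃ t + y₃ t * deriv x₂ t)

/-- The quantity `s = x₃' + x₂x₁' − x₁x₂'` along a curve `x` in the Heisenberg manifold. -/
noncomputable def heisS (x₁ x₂ x₃ : ℝ → ℝ) : ℝ → ℝ := fun t =>
  deriv x₃ t + x₂ t * deriv x₁ t - x₁ t * deriv x₂ t

/-- The quantity `C = D₃[x,y] + x₂·D₁[x,y] − x₁·D₂[x,y]`. -/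
noncomputable def heisC (x₁ x₂ x₃ y₁ y₂ y₃ : ℝ → ℝ) : ℝ → ℝ := fun t =>
  covD₃ x₁ x₂ x₃ y₁ y₂ y₃ t + x₂ t * covD₁ x₁ x₂ x₃ y₁ y₂ y₃ t
    - x₁ t * covD₂ x₁ x₂ x₃ y₁ y₂ y₃ t

/-- The six Euler–Lagrange equations of the Sasaki metric on `TH₃`, in the induced
coordinates `(x¹,x²,x³,y¹,y²,y³)`. -/
def SasakiEL (x₁ x₂ x₃ y₁ y₂ y₃ : ℝ → ℝ) : Prop :=
  (∀ t : ℝ, deriv (fun t => deriv x₁ t + x₂ t * heisS x₁ x₂ x₃ t) t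
      = -(deriv x₂ t) * heisS x₁ x₂ x₃ t) ∧
  (∀ t : ℝ, deriv (fun t => deriv x₂ t - x₁ t * heisS x₁ x₂ x₃ t) t
      = deriv x₁ t * heisS x₁ x₂ x₃ t) ∧
  (∀ t : ℝ, deriv (heisS x₁ x₂ x₃) t = 0) ∧
  (∀ t : ℝ, deriv (fun t => covD₁ x₁ x₂ x₃ y₁ y₂ y₃ t
      + x₂ t * heisC x₁ x₂ x₃ y₁ y₂ y₃ t) t = 0) ∧
  (∀ t : ℝ, deriv (fun t => covD₂ x₁ x₂ x₃ y₁ y₂ y₃ t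
      - x₁ t * heisC x₁ x₂ x₃ y₁ y₂ y₃ t) t = 0) ∧
  (∀ t : ℝ, deriv (heisC x₁ x₂ x₃ y₁ y₂ y₃) t = 0)

/-! The first three Euler–Lagrange expressions of the Sasaki metric are the covariant acceleration
`D[x, x']` with its index lowered by the Heisenberg metric, and the last three are derivatives of
`D[x, y]` with its index lowered. A geodesic is a curve whose acceleration `D[x, x']` vanishes, so
for `y = x'` all six equations hold at once. -/

/-- The field `y` is parallel along the curve `x` for the Levi-Civita connection of the Heisenberg
metric: all three components of its covariant derivative vanish identically. -/
def IsParallelAlong (x₁ x₂ x₃ y₁ y₂ y₃ : ℝ → ℝ) : Prop :=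
  ∀ t : ℝ, covD₁ x₁ x₂ x₃ y₁ y₂ y₃ t = 0 ∧ covD₂ x₁ x₂ x₃ y₁ y₂ y₃ t = 0 ∧
    covD₃ x₁ x₂ x₃ y₁ y₂ y₃ t = 0

section NaturalLift

variable (x₁ x₂ x₃ : ℝ → ℝ) (t : ℝ)

lemma covD₁_deriv_eq_christoffel :
    covD₁ x₁ x₂ x₃ (deriv x₁) (deriv x₂) (deriv x₃) t =
      deriv (deriv x₁) t + 2 * x₂ t * deriv x₁ t * deriv x₂ t
        - 2 * x₁ t * (deriv x₂ t) ^ 2 + 2 * deriv x₂ t * deriv x₃ t := by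
  unfold covD₁
  ring

lemma covD₂_deriv_eq_christoffel :
    covD₂ x₁ x₂ x₃ (deriv x₁) (deriv x₂) (deriv x₃) t =
      deriv (deriv x₂) t - 2 * x₂ t * (deriv x₁ t) ^ 2
        + 2 * x₁ t * deriv x₁ t * deriv x₂ t - 2 * deriv x₁ t * deriv x₃ t := by
  unfold covD₂
  ring

lemma covD₃_deriv_eq_christoffel :
    covD₃ x₁ x₂ x₃ (deriv x₁) (deriv x₂) (deriv x₃) t =
      deriv (deriv x₃) t - 2 * x₁ t * x₂ t * (deriv x₁ t) ^ 2
        + 2 * ((x₁ t) ^ 2 - (x₂ t) ^ 2) * deriv x₁ t * deriv x₂ t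
        + 2 * x₁ t * x₂ t * (deriv x₂ t) ^ 2
        - 2 * x₁ t * deriv x₁ t * deriv x₃ t
        - 2 * x₂ t * deriv x₂ t * deriv x₃ t := by
  unfold covD₃
  ring

lemma covD₁_deriv_eq_heisS :
    covD₁ x₁ x₂ x₃ (deriv x₁) (deriv x₂) (deriv x₃) t =
      deriv (deriv x₁) t + 2 * deriv x₂ t * heisS x₁ x₂ x₃ t := by
  unfold covD₁ heisS
  ring

lemma covD₂_deriv_eq_heisS :
    covD₂ x₁ x₂ x₃ (deriv x₁) (deriv x₂) (deriv x₃) t =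
      deriv (deriv x₂) t - 2 * deriv x₁ t * heisS x₁ x₂ x₃ t := by
  unfold covD₂ heisS
  ring

lemma heisC_deriv :
    heisC x₁ x₂ x₃ (deriv x₁) (deriv x₂) (deriv x₃) t =
      deriv (deriv x₃) t + x₂ t * deriv (deriv x₁) t - x₁ t * deriv (deriv x₂) t := by
  unfold heisC covD₁ covD₂ covD₃
  ring

end NaturalLift

section LoweredAcceleration

variable {x₁ x₂ x₃ : ℝ → ℝ} {t : ℝ}

lemma hasDerivAt_heisS
    (hx₁ : DifferentiableAt ℝ x₁ t) (hx₁' : DifferentiableAt ℝ (deriv x₁) t)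
    (hx₂ : DifferentiableAt ℝ x₂ t) (hx₂' : DifferentiableAt ℝ (deriv x₂) t)
    (hx₃' : DifferentiableAt ℝ (deriv x₃) t) :
    HasDerivAt (heisS x₁ x₂ x₃) (heisC x₁ x₂ x₃ (deriv x₁) (deriv x₂) (deriv x₃) t) t := by
  have product_rule := (hx₃'.hasDerivAt.add (hx₂.hasDerivAt.mul hx₁'.hasDerivAt)).sub
    (hx₁.hasDerivAt.mul hx₂'.hasDerivAt)
  refine HasDerivAt.congr_deriv (f := heisS x₁ x₂ x₃) product_rule ?_
  rw [heisC_deriv]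
  ring

lemma deriv_deriv_add_mul_heisS
    (hx₁ : DifferentiableAt ℝ x₁ t) (hx₁' : DifferentiableAt ℝ (deriv x₁) t)
    (hx₂ : DifferentiableAt ℝ x₂ t) (hx₂' : DifferentiableAt ℝ (deriv x₂) t)
    (hx₃' : DifferentiableAt ℝ (deriv x₃) t) :
    deriv (fun t => deriv x₁ t + x₂ t * heisS x₁ x₂ x₃ t) t =
      -(deriv x₂ t) * heisS x₁ x₂ x₃ t
        + (covD₁ x₁ x₂ x₃ (deriv x₁) (deriv x₂) (deriv x₃) t
          + x₂ t * heisC x₁ x₂ x₃ (deriv x₁) (deriv x₂) (deriv x₃) t) := by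
  have hs := hasDerivAt_heisS hx₁ hx₁' hx₂ hx₂' hx₃'
  refine (hx₁'.hasDerivAt.add (hx₂.hasDerivAt.mul hs)).deriv.trans ?_
  rw [covD₁_deriv_eq_heisS]
  ring

lemma deriv_deriv_sub_mul_heisS
    (hx₁ : DifferentiableAt ℝ x₁ t) (hx₁' : DifferentiableAt ℝ (deriv x₁) t)
    (hx₂ : DifferentiableAt ℝ x₂ t) (hx₂' : DifferentiableAt ℝ (deriv x₂) t)
    (hx₃' : DifferentiableAt ℝ (deriv x₃) t) :
    deriv (fun t => deriv x₂ t - x₁ t * heisS x₁ x₂ x₃ t) t =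
      deriv x₁ t * heisS x₁ x₂ x₃ t
        + (covD₂ x₁ x₂ x₃ (deriv x₁) (deriv x₂) (deriv x₃) t
          - x₁ t * heisC x₁ x₂ x₃ (deriv x₁) (deriv x₂) (deriv x₃) t) := by
  have hs := hasDerivAt_heisS hx₁ hx₁' hx₂ hx₂' hx₃'
  refine (hx₂'.hasDerivAt.sub (hx₁.hasDerivAt.mul hs)).deriv.trans ?_
  rw [covD₂_deriv_eq_heisS]
  ring

end LoweredAcceleration

namespace IsParallelAlong

variable {x₁ x₂ x₃ y₁ y₂ y₃ : ℝ → ℝ}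

lemma covD₁_eq_zero (hy : IsParallelAlong x₁ x₂ x₃ y₁ y₂ y₃) : covD₁ x₁ x₂ x₃ y₁ y₂ y₃ = 0 :=
  funext fun t => (hy t).1

lemma covD₂_eq_zero (hy : IsParallelAlong x₁ x₂ x₃ y₁ y₂ y₃) : covD₂ x₁ x₂ x₃ y₁ y₂ y₃ = 0 :=
  funext fun t => (hy t).2.1

lemma heisC_eq_zero (hy : IsParallelAlong x₁ x₂ x₃ y₁ y₂ y₃) : heisC x₁ x₂ x₃ y₁ y₂ y₃ = 0 := by
  funext t
  obtain ⟨hD₁, hD₂, hD₃⟩ := hy t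
  simp [heisC, hD₁, hD₂, hD₃]

end IsParallelAlong

theorem sasakiEL_of_isParallelAlong {x₁ x₂ x₃ y₁ y₂ y₃ : ℝ → ℝ}
    (hx₁ : Differentiable ℝ x₁) (hx₁' : Differentiable ℝ (deriv x₁))
    (hx₂ : Differentiable ℝ x₂) (hx₂' : Differentiable ℝ (deriv x₂))
    (hx₃' : Differentiable ℝ (deriv x₃))
    (hx : IsParallelAlong x₁ x₂ x₃ (deriv x₁) (deriv x₂) (deriv x₃))
    (hy : IsParallelAlong x₁ x₂ x₃ y₁ y₂ y₃) :
    SasakiEL x₁ x₂ x₃ y₁ y₂ y₃ := by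
  refine ⟨fun t => ?_, fun t => ?_, fun t => ?_, fun t => ?_, fun t => ?_, fun t => ?_⟩
  · simp [deriv_deriv_add_mul_heisS (hx₁ t) (hx₁' t) (hx₂ t) (hx₂' t) (hx₃' t),
      hx.covD₁_eq_zero, hx.heisC_eq_zero]
  · simp [deriv_deriv_sub_mul_heisS (hx₁ t) (hx₁' t) (hx₂ t) (hx₂' t) (hx₃' t),
      hx.covD₂_eq_zero, hx.heisC_eq_zero]
  · simp [(hasDerivAt_heisS (hx₁ t) (hx₁' t) (hx₂ t) (hx₂' t) (hx₃' t)).deriv, hx.heisC_eq_zero]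
  · simp [hy.covD₁_eq_zero, hy.heisC_eq_zero]
  · simp [hy.covD₂_eq_zero, hy.heisC_eq_zero]
  · simp [hy.heisC_eq_zero]

/-- If the base curve `x` satisfies the Christoffel form of the Heisenberg geodesic
equations, then its natural lift `y = x'` is parallel along `x`, and the pair `(x, x')`
satisfies all six Euler–Lagrange equations of the Sasaki metric on `TH₃`. -/
theorem naturalLift_parallel_and_sasakiEL (x₁ x₂ x₃ : ℝ → ℝ)
    (hx₁ : Differentiable ℝ x₁) (hx₁' : Differentiable ℝ (deriv x₁))
    (hx₂ : Differentiable ℝ x₂) (hx₂' : Differentiable ℝ (deriv x₂))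
    (hx₃ : Differentiable ℝ x₃) (hx₃' : Differentiable ℝ (deriv x₃))
    (hgeo₁ : ∀ t : ℝ, deriv (deriv x₁) t + 2 * x₂ t * deriv x₁ t * deriv x₂ t
        - 2 * x₁ t * (deriv x₂ t) ^ 2 + 2 * deriv x₂ t * deriv x₃ t = 0)
    (hgeo₂ : ∀ t : ℝ, deriv (deriv x₂) t - 2 * x₂ t * (deriv x₁ t) ^ 2
        + 2 * x₁ t * deriv x₁ t * deriv x₂ t - 2 * deriv x₁ t * deriv x₃ t = 0)
    (hgeo₃ : ∀ t : ℝ, deriv (deriv x₃) t - 2 * x₁ t * x₂ t * (deriv x₁ t) ^ 2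
        + 2 * ((x₁ t) ^ 2 - (x₂ t) ^ 2) * deriv x₁ t * deriv x₂ t
        + 2 * x₁ t * x₂ t * (deriv x₂ t) ^ 2
        - 2 * x₁ t * deriv x₁ t * deriv x₃ t
        - 2 * x₂ t * deriv x₂ t * deriv x₃ t = 0) :
    (∀ t : ℝ, covD₁ x₁ x₂ x₃ (deriv x₁) (deriv x₂) (deriv x₃) t = 0 ∧
      covD₂ x₁ x₂ x₃ (deriv x₁) (deriv x₂) (deriv x₃) t = 0 ∧
      covD₃ x₁ x₂ x₃ (deriv x₁) (deriv x₂) (deriv x₃) t = 0) ∧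
    SasakiEL x₁ x₂ x₃ (deriv x₁) (deriv x₂) (deriv x₃) := by
  have hx : IsParallelAlong x₁ x₂ x₃ (deriv x₁) (deriv x₂) (deriv x₃) := fun t =>
    ⟨(covD₁_deriv_eq_christoffel x₁ x₂ x₃ t).trans (hgeo₁ t),
      (covD₂_deriv_eq_christoffel x₁ x₂ x₃ t).trans (hgeo₂ t),
      (covD₃_deriv_eq_christoffel x₁ x₂ x₃ t).trans (hgeo₃ t)⟩
  exact ⟨hx, sasakiEL_of_isParallelAlong hx₁ hx₁' hx₂ hx₂' hx₃' hx hx⟩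
end

section
/- Fix l, m, n ∈ ℝ. (a) The pair consisting of the constant curve x ≡ (0,0,0) and y(t) = (lt, mt, nt) satisfies all six Euler–Lagrange equations of the Sasaki metric on TH₃; it passes through the origin of TH₃ with velocity (0,0,0,l,m,n). (b) Conversely, if x ≡ (0,0,0) and y = (y₁,y₂,y₃) : ℝ → ℝ³ is twice differentiable and the pair (x,y) satisfies the six Euler–Lagrange equations, then y(t) = y(0) + t·y'(0) for all t ∈ ℝ. -/
/-!
Over a constant base curve the Christoffel terms vanish, so the covariant derivative of `y` is `y'`
and the horizontal equations are trivial. With `C = y₃' + b y₁' - a y₂'` over the point `(a, b, c)`,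
the vertical equations are `y₁'' + b C' = 0`, `y₂'' - a C' = 0` and `C' = 0`: the last one reduces
the others to `y₁'' = 0` and `y₂'' = 0`, after which `C' = y₃''`.
-/

section Affine

variable {𝕜 E : Type*} [RCLike 𝕜] [NormedAddCommGroup E] [NormedSpace 𝕜 E] {y : 𝕜 → E}

theorem eq_add_smul_deriv_of_deriv_deriv_eq_zero (hy : Differentiable 𝕜 y)
    (hy' : Differentiable 𝕜 (deriv y)) (h : ∀ t, deriv (deriv y) t = 0) (t : 𝕜) :
    y t = y 0 + t • deriv y 0 := by
  have deriv_eq_deriv_zero (s : 𝕜) : deriv y s = deriv y 0 :=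
    is_const_of_deriv_eq_zero hy' h s 0
  have remainder_hasDerivAt (s : 𝕜) : HasDerivAt (fun u => y u - u • deriv y 0) 0 s := by
    simpa [deriv_eq_deriv_zero s] using
      (hy s).hasDerivAt.fun_sub ((hasDerivAt_id' s).smul_const (deriv y 0))
  have remainder_const : y t - t • deriv y 0 = y 0 - (0 : 𝕜) • deriv y 0 :=
    is_const_of_deriv_eq_zero (fun s => (remainder_hasDerivAt s).differentiableAt)
      (fun s => (remainder_hasDerivAt s).deriv) t 0
  rwa [zero_smul, sub_zero, sub_eq_iff_eq_add] at remainder_const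

theorem deriv_deriv_eq_zero_of_eq_add_smul {v w : E} (h : ∀ t, y t = v + t • w) (t : 𝕜) :
    deriv (deriv y) t = 0 := by
  have deriv_eq : deriv y = fun _ => w := by
    funext s
    rw [funext h]
    simpa using (((hasDerivAt_id' s).smul_const w).const_add v).deriv
  rw [deriv_eq, deriv_const]

theorem deriv_deriv_eq_zero_iff_eq_add_smul (hy : Differentiable 𝕜 y)
    (hy' : Differentiable 𝕜 (deriv y)) :
    (∀ t, deriv (deriv y) t = 0) ↔ ∀ t, y t = y 0 + t • deriv y 0 :=
  ⟨eq_add_smul_deriv_of_deriv_deriv_eq_zero hy hy', deriv_deriv_eq_zero_of_eq_add_smul⟩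

end Affine

section ConstantBaseCurve

variable (a b c : ℝ) (y₁ y₂ y₃ : ℝ → ℝ)

theorem heisS_const : heisS (fun _ => a) (fun _ => b) (fun _ => c) = fun _ => 0 := by
  funext t
  simp [heisS]

theorem covD₁_const :
    covD₁ (fun _ => a) (fun _ => b) (fun _ => c) y₁ y₂ y₃ = deriv y₁ := by
  funext t
  simp [covD₁]

theorem covD₂_const :
    covD₂ (fun _ => a) (fun _ => b) (fun _ => c) y₁ y₂ y₃ = deriv y₂ := by
  funext t
  simp [covD₂]

theorem covD₃_const :
    covD₃ (fun _ => a) (fun _ => b) (fun _ => c) y₁ y₂ y₃ = deriv y₃ := by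
  funext t
  simp [covD₃]

theorem heisC_const :
    heisC (fun _ => a) (fun _ => b) (fun _ => c) y₁ y₂ y₃ =
      fun t => deriv y₃ t + b * deriv y₁ t - a * deriv y₂ t := by
  funext t
  simp only [heisC, covD₁_const, covD₂_const, covD₃_const]

variable {y₁ y₂ y₃}

theorem hasDerivAt_heisC_const (hy₁ : Differentiable ℝ (deriv y₁))
    (hy₂ : Differentiable ℝ (deriv y₂)) (hy₃ : Differentiable ℝ (deriv y₃)) (t : ℝ) :
    HasDerivAt (heisC (fun _ => a) (fun _ => b) (fun _ => c) y₁ y₂ y₃)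
      (deriv (deriv y₃) t + b * deriv (deriv y₁) t - a * deriv (deriv y₂) t) t := by
  rw [heisC_const]
  exact ((hy₃ t).hasDerivAt.add ((hy₁ t).hasDerivAt.const_mul b)).sub
    ((hy₂ t).hasDerivAt.const_mul a)

theorem sasakiEL_const_iff_deriv_deriv_eq_zero (hy₁ : Differentiable ℝ (deriv y₁))
    (hy₂ : Differentiable ℝ (deriv y₂)) (hy₃ : Differentiable ℝ (deriv y₃)) :
    SasakiEL (fun _ => a) (fun _ => b) (fun _ => c) y₁ y₂ y₃ ↔
      ∀ t, deriv (deriv y₁) t = 0 ∧ deriv (deriv y₂) t = 0 ∧ deriv (deriv y₃) t = 0 := by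
  have hC := hasDerivAt_heisC_const a b c hy₁ hy₂ hy₃
  let C := heisC (fun _ => a) (fun _ => b) (fun _ => c) y₁ y₂ y₃
  have vertical₁ (t : ℝ) : deriv (fun t => deriv y₁ t + b * C t) t =
      deriv (deriv y₁) t + b * deriv C t := by
    rw [(hC t).deriv]
    exact ((hy₁ t).hasDerivAt.fun_add ((hC t).const_mul b)).deriv
  have vertical₂ (t : ℝ) : deriv (fun t => deriv y₂ t - a * C t) t =
      deriv (deriv y₂) t - a * deriv C t := by
    rw [(hC t).deriv]
    exact ((hy₂ t).hasDerivAt.fun_sub ((hC t).const_mul a)).deriv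
  simp only [SasakiEL, heisS_const, covD₁_const, covD₂_const, C, vertical₁, vertical₂,
    (hC _).deriv, deriv_const, mul_zero, add_zero, sub_zero, implies_true, true_and]
  constructor
  · rintro ⟨eq₁, eq₂, eqC⟩ t
    have y₁_eq : deriv (deriv y₁) t = 0 := by simpa [eqC t] using eq₁ t
    have y₂_eq : deriv (deriv y₂) t = 0 := by simpa [eqC t] using eq₂ t
    exact ⟨y₁_eq, y₂_eq, by simpa [y₁_eq, y₂_eq] using eqC t⟩
  · intro h
    simp [h]

theorem sasakiEL_fibre_geodesics_general
    (hy₁ : Differentiable ℝ y₁) (hy₁' : Differentiable ℝ (deriv y₁))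
    (hy₂ : Differentiable ℝ y₂) (hy₂' : Differentiable ℝ (deriv y₂))
    (hy₃ : Differentiable ℝ y₃) (hy₃' : Differentiable ℝ (deriv y₃)) :
    SasakiEL (fun _ => a) (fun _ => b) (fun _ => c) y₁ y₂ y₃ ↔
      ∀ t, y₁ t = y₁ 0 + t * deriv y₁ 0 ∧ y₂ t = y₂ 0 + t * deriv y₂ 0 ∧
        y₃ t = y₃ 0 + t * deriv y₃ 0 := by
  rw [sasakiEL_const_iff_deriv_deriv_eq_zero a b c hy₁' hy₂' hy₃']
  simp only [forall_and, deriv_deriv_eq_zero_iff_eq_add_smul, hy₁, hy₁', hy₂, hy₂', hy₃, hy₃',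
    smul_eq_mul]

end ConstantBaseCurve

/-- Geodesics of `(TH₃, gˢ)` lying in the fibre over the origin:
(a) the pair `x ≡ (0,0,0)`, `y(t) = (lt, mt, nt)` satisfies all six Euler–Lagrange
equations of the Sasaki metric on `TH₃` and passes through the origin of `TH₃` with
velocity `(0,0,0,l,m,n)`;
(b) conversely, if `x ≡ (0,0,0)` and `(x,y)` satisfies the six equations with `y` twice
differentiable, then `y(t) = y(0) + t·y'(0)` for all `t`. -/
theorem sasakiEL_fibre_geodesics (l m n : ℝ) :
    (SasakiEL (fun _ => 0) (fun _ => 0) (fun _ => 0)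
        (fun t => l * t) (fun t => m * t) (fun t => n * t) ∧
      (fun _ : ℝ => (0 : ℝ)) 0 = 0 ∧ (fun _ : ℝ => (0 : ℝ)) 0 = 0 ∧
      (fun _ : ℝ => (0 : ℝ)) 0 = 0 ∧
      (fun t : ℝ => l * t) 0 = 0 ∧ (fun t : ℝ => m * t) 0 = 0 ∧
      (fun t : ℝ => n * t) 0 = 0 ∧
      deriv (fun _ : ℝ => (0 : ℝ)) 0 = 0 ∧ deriv (fun _ : ℝ => (0 : ℝ)) 0 = 0 ∧
      deriv (fun _ : ℝ => (0 : ℝ)) 0 = 0 ∧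
      deriv (fun t : ℝ => l * t) 0 = l ∧ deriv (fun t : ℝ => m * t) 0 = m ∧
      deriv (fun t : ℝ => n * t) 0 = n) ∧
    (∀ y₁ y₂ y₃ : ℝ → ℝ,
      Differentiable ℝ y₁ → Differentiable ℝ (deriv y₁) →
      Differentiable ℝ y₂ → Differentiable ℝ (deriv y₂) →
      Differentiable ℝ y₃ → Differentiable ℝ (deriv y₃) →
      SasakiEL (fun _ => 0) (fun _ => 0) (fun _ => 0) y₁ y₂ y₃ →
      ∀ t : ℝ, y₁ t = y₁ 0 + t * deriv y₁ 0 ∧ y₂ t = y₂ 0 + t * deriv y₂ 0 ∧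
        y₃ t = y₃ 0 + t * deriv y₃ 0) := by
  have differentiable_linear (k : ℝ) : Differentiable ℝ (fun t => k * t) := by fun_prop
  have differentiable_deriv_linear (k : ℝ) : Differentiable ℝ (deriv fun t => k * t) := by simp
  exact ⟨⟨(sasakiEL_fibre_geodesics_general 0 0 0
      (differentiable_linear l) (differentiable_deriv_linear l)
      (differentiable_linear m) (differentiable_deriv_linear m)
      (differentiable_linear n) (differentiable_deriv_linear n)).2
      fun t => by simp [mul_comm], by simp⟩,
    fun _ _ _ hy₁ hy₁' hy₂ hy₂' hy₃ hy₃' =>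
      (sasakiEL_fibre_geodesics_general 0 0 0 hy₁ hy₁' hy₂ hy₂' hy₃ hy₃').1⟩
end
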